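/- arXiv:2504.01479 — 2 statements merged into one kernel-verified Lean document; each statement's English description precedes it below -/
import Mathlib

section
/- For every positive integer N and every λ ∈ ℂ, the determinant of the n-order odd generalized polarization matrix satisfies det M_{N,s}^{(n)}(λ) = (−1)^{⌊N/2⌋} · Σ_{k=0}^{N} (λ^{N−k} / (−2)^k) · ( Σ_{1 ≤ i_1 < i_2 < ⋯ < i_k ≤ N} (−1)^{i_1+⋯+i_k} · exp(2 n Σ_{l=1}^{k} (−1)^l ξ_{i_l}) ), where for k = 0 the inner sum is 1 (so the k = 0 term is λ^N). -/
open Finset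

/-!
Write `a i = exp (-n ξ i)`. The matrix is embedded in the rank-one family
`W u = M + (u - 1/2) a aᵀ`, so that `M = W (1/2)`. Its determinant is affine in `u`, and bordering
`W u` by one more row and column, both multiples of `a` (off the corner), gives
`det W_N u = F_N + u E_N` with
`F_{N+1} = λ_{N+1} F_N + exp (2 n ξ_{N+1}) / 4 * E_N`,
`E_{N+1} = exp (-2 n ξ_{N+1}) F_N + λ_{N+1} E_N`
(`det_border`, `det_polMatrix`). Up to the sign `(-1)^⌊N/2⌋`, the subsets of `{1, …, N}` of even
cardinality in the claimed expansion sum to `F_N` and those of odd cardinality sum to `E_N / 2`: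
adjoining the largest index `N + 1` to a subset `s` changes the parity of `s` and multiplies its
term by a factor depending only on that parity (`expTerm_insert`), which is the same recursion.
-/

/-- The signed exponential sum
`Σ_{lo ≤ i_1 < ⋯ < i_k ≤ hi} (−1)^{i_1+⋯+i_k} exp(2 n Σ_{l=1}^{k} (−1)^l ξ_{i_l})`,
where the `l`-th smallest element of a subset `s` carries the sign `(−1)^l`
(the position of `i ∈ s` is `(s.filter (· ≤ i)).card`). For `k = 0` the sum is `1`. -/
noncomputable def sgnExpSum (n : ℕ) (ξ : ℕ → ℝ) (lo hi k : ℕ) : ℝ :=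
  ∑ s ∈ (Finset.Icc lo hi).powersetCard k,
    (-1 : ℝ) ^ (∑ i ∈ s, i) *
      Real.exp (2 * n * ∑ i ∈ s, (-1 : ℝ) ^ ((s.filter (· ≤ i)).card) * ξ i)

/-- The `n`-order odd generalized polarization matrix `M_{N,s}^{(n)}(λ)`:
with 1-based indices `p = i+1`, `q = j+1`, the `(p,p)` entry is
`(−1)^{p−1} λ + (1/2) e^{−2nξ_p}`, the `(p,q)` entry for `p < q` is
`−sinh(nξ_q) e^{−nξ_p}`, and for `p > q` it is `cosh(nξ_p) e^{−nξ_q}`. -/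
noncomputable def Ms (n N : ℕ) (ξ : ℕ → ℝ) (l : ℂ) : Matrix (Fin N) (Fin N) ℂ :=
  fun i j =>
    if i = j then
      (-1 : ℂ) ^ (i : ℕ) * l + ((Real.exp (-(2 * n * ξ ((i : ℕ) + 1))) / 2 : ℝ) : ℂ)
    else if i < j then
      -(((Real.sinh (n * ξ ((j : ℕ) + 1)) * Real.exp (-(n * ξ ((i : ℕ) + 1)))) : ℝ) : ℂ)
    else
      (((Real.cosh (n * ξ ((i : ℕ) + 1)) * Real.exp (-(n * ξ ((j : ℕ) + 1)))) : ℝ) : ℂ)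

/-- The summand of the determinant expansion attached to the index set `s ⊆ {1, …, N}`. -/
noncomputable def expTerm (n : ℕ) (ξ : ℕ → ℝ) (l : ℂ) (N : ℕ) (s : Finset ℕ) : ℂ :=
  l ^ (N - s.card) / (-2) ^ s.card * (((-1 : ℝ) ^ (∑ i ∈ s, i) *
      Real.exp (2 * n * ∑ i ∈ s, (-1 : ℝ) ^ ((s.filter (· ≤ i)).card) * ξ i) : ℝ) : ℂ)

/-- The contribution of the index sets of even cardinality. -/
noncomputable def evenPart (n : ℕ) (ξ : ℕ → ℝ) (l : ℂ) (N : ℕ) : ℂ :=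
  (-1) ^ (N / 2) * ∑ s ∈ (Icc 1 N).powerset, if Even s.card then expTerm n ξ l N s else 0

/-- The contribution of the index sets of odd cardinality. -/
noncomputable def oddPart (n : ℕ) (ξ : ℕ → ℝ) (l : ℂ) (N : ℕ) : ℂ :=
  (-1) ^ (N / 2) * ∑ s ∈ (Icc 1 N).powerset, if Even s.card then 0 else expTerm n ξ l N s

/-- The one-parameter family `M + (u - 1/2) a aᵀ` with `a i = exp (-n ξ i)`. -/
noncomputable def polMatrix (n N : ℕ) (ξ : ℕ → ℝ) (l u : ℂ) : Matrix (Fin N) (Fin N) ℂ :=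
  fun i j => Ms n N ξ l i j + (u - 1 / 2) *
    (Complex.exp (-(n * ξ ((i : ℕ) + 1))) * Complex.exp (-(n * ξ ((j : ℕ) + 1))))

/-- Determinant of a bordered matrix, written without inverses: it is affine in the corner entry
`r`, and for `r = 1` the Schur complement applies. -/
lemma det_border {m : Type*} [Fintype m] [DecidableEq m] (A : Matrix m m ℂ)
    (B : Matrix m (Fin 1) ℂ) (C : Matrix (Fin 1) m ℂ) (r : ℂ) :
    (Matrix.fromBlocks A B C (Matrix.of fun _ _ => r)).det = (r - 1) * A.det + (A - B * C).det := by
  have h : Matrix.fromBlocks A B C (Matrix.of fun _ _ => r) =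
      (Matrix.fromBlocks A B C 1).updateRow (Sum.inr 0)
        (Matrix.fromBlocks A B C 1 (Sum.inr 0) +
          (r - 1) • Matrix.fromBlocks A B (0 : Matrix (Fin 1) m ℂ) 1 (Sum.inr 0)) := by
    ext i j
    rcases i with i | i
    · rw [Matrix.updateRow_ne (by simp)]
      rcases j with j | j <;> simp
    · rw [Subsingleton.elim i 0, Matrix.updateRow_self]
      rcases j with j | j
      · simp
      · simp [Subsingleton.elim j 0]
  have h0 : (Matrix.fromBlocks A B C 1).updateRow (Sum.inr 0)
        (Matrix.fromBlocks A B (0 : Matrix (Fin 1) m ℂ) 1 (Sum.inr 0)) =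
      Matrix.fromBlocks A B (0 : Matrix (Fin 1) m ℂ) 1 := by
    ext i j
    rcases i with i | i
    · rw [Matrix.updateRow_ne (by simp)]
      rcases j with j | j <;> simp
    · rw [Subsingleton.elim i 0, Matrix.updateRow_self]
  rw [h, Matrix.det_updateRow_add, Matrix.det_updateRow_smul, Matrix.updateRow_eq_self, h0,
    Matrix.det_fromBlocks_one₂₂, Matrix.det_fromBlocks_zero₂₁, Matrix.det_one]
  ring

lemma expTerm_succ (n : ℕ) (ξ : ℕ → ℝ) (l : ℂ) (N : ℕ) (s : Finset ℕ) (hs : s ⊆ Icc 1 N) :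
    expTerm n ξ l (N + 1) s = l * expTerm n ξ l N s := by
  have hc : s.card ≤ N := by simpa using card_le_card hs
  unfold expTerm
  rw [Nat.succ_sub hc, pow_succ]
  ring

lemma expTerm_insert (n : ℕ) (ξ : ℕ → ℝ) (l : ℂ) (N : ℕ) (s : Finset ℕ) (hs : s ⊆ Icc 1 N) :
    expTerm n ξ l (N + 1) (insert (N + 1) s) =
      (-1) ^ N / 2 * Complex.exp (2 * n * ((-1) ^ (s.card + 1) * ξ (N + 1))) *
        expTerm n ξ l N s := by
  have hlt : ∀ i ∈ s, i ≤ N := fun i hi => (mem_Icc.1 (hs hi)).2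
  have hN : N + 1 ∉ s := fun h => by have := hlt _ h; omega
  have h1 : ((insert (N + 1) s).filter (· ≤ N + 1)).card = s.card + 1 := by
    rw [filter_true_of_mem, card_insert_of_notMem hN]
    intro i hi
    rcases mem_insert.1 hi with rfl | hi
    · exact le_rfl
    · have := hlt i hi; omega
  have h2 : ∀ i ∈ s, (insert (N + 1) s).filter (· ≤ i) = s.filter (· ≤ i) := by
    intro i hi
    have := hlt i hi
    rw [filter_insert, if_neg (by omega)]
  have h3 : ∑ i ∈ s, (-1 : ℝ) ^ ((insert (N + 1) s).filter (· ≤ i)).card * ξ i =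
      ∑ i ∈ s, (-1 : ℝ) ^ (s.filter (· ≤ i)).card * ξ i :=
    sum_congr rfl fun i hi => by rw [h2 i hi]
  unfold expTerm
  rw [card_insert_of_notMem hN, sum_insert hN, sum_insert hN, h1,
    h3, mul_add, Real.exp_add, Nat.add_sub_add_right]
  push_cast
  rw [pow_succ (-2 : ℂ), pow_add (-1 : ℂ) (N + 1), pow_succ (-1 : ℂ) N]
  have : ((-2 : ℂ)) ^ s.card ≠ 0 := pow_ne_zero _ (by norm_num)
  field_simp

lemma neg_one_pow_half_succ (N : ℕ) :
    (-1 : ℂ) ^ ((N + 1) / 2) = (-1) ^ (N / 2) * (-1) ^ N := by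
  rcases Nat.even_or_odd' N with ⟨k, rfl | rfl⟩
  · rw [show (2 * k + 1) / 2 = k by omega, show 2 * k / 2 = k by omega, pow_mul]; simp
  · rw [show (2 * k + 1 + 1) / 2 = k + 1 by omega, show (2 * k + 1) / 2 = k by omega,
      pow_succ _ (2 * k), pow_mul, pow_succ]
    simp

lemma neg_one_pow_mul_self (N : ℕ) : (-1 : ℂ) ^ N * (-1) ^ N = 1 := by
  rw [← mul_pow]; simp

lemma sum_powerset_Icc_succ (N : ℕ) (g : Finset ℕ → ℂ) :
    ∑ s ∈ (Icc 1 (N + 1)).powerset, g s =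
      ∑ s ∈ (Icc 1 N).powerset, g s + ∑ s ∈ (Icc 1 N).powerset, g (insert (N + 1) s) := by
  rw [← insert_Icc_right_eq_Icc_add_one (by omega : 1 ≤ N + 1), sum_powerset_insert (by simp)]

lemma notMem_of_subset_Icc {N : ℕ} {s : Finset ℕ} (hs : s ⊆ Icc 1 N) : N + 1 ∉ s := fun h => by
  have := (mem_Icc.1 (hs h)).2
  omega

lemma evenPart_succ (n : ℕ) (ξ : ℕ → ℝ) (l : ℂ) (N : ℕ) :
    evenPart n ξ l (N + 1) = (-1) ^ N * l * evenPart n ξ l N +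
      Complex.exp (2 * n * ξ (N + 1)) / 2 * oddPart n ξ l N := by
  unfold evenPart oddPart
  rw [sum_powerset_Icc_succ, neg_one_pow_half_succ, mul_add]
  congr 1
  · simp only [mul_sum]
    refine sum_congr rfl fun s hs => ?_
    rw [expTerm_succ n ξ l N s (mem_powerset.1 hs)]
    split_ifs <;> ring
  · simp only [mul_sum]
    refine sum_congr rfl fun s hs => ?_
    have hs' := mem_powerset.1 hs
    rw [expTerm_insert n ξ l N s hs', card_insert_of_notMem (notMem_of_subset_Icc hs')]
    by_cases h : Even s.card
    · simp [Nat.even_add_one, h]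
    · have h' : Even (s.card + 1) := Nat.even_add_one.2 h
      rw [if_pos h', if_neg h, h'.neg_one_pow, one_mul, ← mul_assoc]
      linear_combination ((-1) ^ (N / 2) * Complex.exp (2 * n * ξ (N + 1)) / 2 *
        expTerm n ξ l N s) * neg_one_pow_mul_self N

lemma oddPart_succ (n : ℕ) (ξ : ℕ → ℝ) (l : ℂ) (N : ℕ) :
    oddPart n ξ l (N + 1) = (-1) ^ N * l * oddPart n ξ l N +
      Complex.exp (-(2 * n * ξ (N + 1))) / 2 * evenPart n ξ l N := by
  unfold evenPart oddPart
  rw [sum_powerset_Icc_succ, neg_one_pow_half_succ, mul_add]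
  congr 1
  · simp only [mul_sum]
    refine sum_congr rfl fun s hs => ?_
    rw [expTerm_succ n ξ l N s (mem_powerset.1 hs)]
    split_ifs <;> ring
  · simp only [mul_sum]
    refine sum_congr rfl fun s hs => ?_
    have hs' := mem_powerset.1 hs
    rw [expTerm_insert n ξ l N s hs', card_insert_of_notMem (notMem_of_subset_Icc hs')]
    by_cases h : Even s.card
    · have h' : ¬ Even (s.card + 1) := by simpa [Nat.even_add_one] using h
      rw [if_neg h', if_pos h, pow_succ, h.neg_one_pow,
        show (2 * n * (1 * -1 * ξ (N + 1)) : ℂ) = -(2 * n * ξ (N + 1)) by ring]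
      linear_combination ((-1) ^ (N / 2) * Complex.exp (-(2 * n * ξ (N + 1))) / 2 *
        expTerm n ξ l N s) * neg_one_pow_mul_self N
    · simp [Nat.even_add_one, h]

/-- The block decomposition of `polMatrix` along its last index. -/
lemma polMatrix_succ (n N : ℕ) (ξ : ℕ → ℝ) (l u : ℂ) :
    (polMatrix n (N + 1) ξ l u).submatrix finSumFinEquiv finSumFinEquiv =
      Matrix.fromBlocks (polMatrix n N ξ l u)
        (Matrix.of fun i _ => Complex.exp (-(n * ξ ((i : ℕ) + 1))) *
          (u * Complex.exp (-(n * ξ (N + 1))) - Complex.exp (n * ξ (N + 1)) / 2))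
        (Matrix.of fun _ j => (u * Complex.exp (-(n * ξ (N + 1))) + Complex.exp (n * ξ (N + 1)) / 2) *
          Complex.exp (-(n * ξ ((j : ℕ) + 1))))
        (Matrix.of fun _ _ => (-1) ^ N * l + u * Complex.exp (-(2 * n * ξ (N + 1)))) := by
  ext i j
  rcases i with i | i <;> rcases j with j | j
  · simp only [polMatrix, Ms, Matrix.submatrix_apply, Fin.ext_iff, Fin.lt_def,
      finSumFinEquiv_apply_left, Fin.val_castAdd, Matrix.fromBlocks_apply₁₁]
  · have hi := i.2
    simp only [Fin.fin_one_eq_zero j, polMatrix, Ms, Matrix.submatrix_apply, Fin.ext_iff,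
      Fin.lt_def, finSumFinEquiv_apply_left, finSumFinEquiv_apply_right, Fin.val_castAdd,
      Fin.val_natAdd, Matrix.fromBlocks_apply₁₂, Matrix.of_apply, Fin.val_zero, add_zero]
    rw [if_neg hi.ne, if_pos hi]
    push_cast
    rw [Complex.sinh]
    ring
  · have hj := j.2
    simp only [Fin.fin_one_eq_zero i, polMatrix, Ms, Matrix.submatrix_apply, Fin.ext_iff,
      Fin.lt_def, finSumFinEquiv_apply_left, finSumFinEquiv_apply_right, Fin.val_castAdd,
      Fin.val_natAdd, Matrix.fromBlocks_apply₂₁, Matrix.of_apply, Fin.val_zero, add_zero]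
    rw [if_neg hj.ne', if_neg hj.le.not_gt]
    push_cast
    rw [Complex.cosh]
    ring
  · simp only [Fin.fin_one_eq_zero i, Fin.fin_one_eq_zero j, polMatrix, Ms,
      Matrix.submatrix_apply, finSumFinEquiv_apply_right,
      Fin.val_natAdd, Matrix.fromBlocks_apply₂₂, Matrix.of_apply, Fin.val_zero, add_zero, if_true]
    push_cast
    rw [← Complex.exp_add,
      show (-(n * ξ (N + 1)) + -(n * ξ (N + 1)) : ℂ) = -(2 * n * ξ (N + 1)) by ring]
    ring

lemma det_polMatrix (n N : ℕ) (ξ : ℕ → ℝ) (l u : ℂ) :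
    (polMatrix n N ξ l u).det = evenPart n ξ l N + 2 * u * oddPart n ξ l N := by
  induction N generalizing u with
  | zero => simp [evenPart, oddPart, expTerm]
  | succ N ih =>
    rw [← Matrix.det_submatrix_equiv_self finSumFinEquiv, polMatrix_succ, det_border]
    set x := Complex.exp (-(n * ξ (N + 1))) with hx
    set y := Complex.exp (n * ξ (N + 1)) with hy
    have hx2 : Complex.exp (-(2 * n * ξ (N + 1))) = x ^ 2 := by
      rw [hx, ← Complex.exp_nat_mul]; congr 1; push_cast; ring
    have hy2 : Complex.exp (2 * n * ξ (N + 1)) = y ^ 2 := by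
      rw [hy, ← Complex.exp_nat_mul]; congr 1; push_cast; ring
    -- subtracting the rank-one product of the border only shifts the parameter of the family
    have hA : polMatrix n N ξ l u -
        (Matrix.of fun (i : Fin N) (_ : Fin 1) => Complex.exp (-(n * ξ ((i : ℕ) + 1))) *
          (u * x - y / 2)) *
        (Matrix.of fun (_ : Fin 1) (j : Fin N) => (u * x + y / 2) *
          Complex.exp (-(n * ξ ((j : ℕ) + 1)))) =
        polMatrix n N ξ l (u - (u * x - y / 2) * (u * x + y / 2)) := by
      ext i j
      simp only [Matrix.sub_apply, Matrix.mul_apply, Matrix.of_apply, polMatrix,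
        Finset.univ_unique, Finset.sum_singleton]
      ring
    refine (congrArg (fun A : Matrix (Fin N) (Fin N) ℂ => _ + A.det) hA).trans ?_
    rw [ih, ih, evenPart_succ, oddPart_succ, hx2, hy2]
    ring

/-- Explicit formula for the determinant of the `n`-order odd GPM. -/
theorem det_Ms_eq (N n : ℕ) (hN : 0 < N) (hn : 0 < n) (ξ : ℕ → ℝ)
    (hξ : ∀ i j, 1 ≤ i → i < j → j ≤ N → ξ j < ξ i) (hpos : 0 < ξ N) (l : ℂ) :
    (Ms n N ξ l).det =
      (-1 : ℂ) ^ (N / 2) *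
        ∑ k ∈ Finset.range (N + 1),
          l ^ (N - k) / (-2) ^ k * ((sgnExpSum n ξ 1 N k : ℝ) : ℂ) := by
  have hM : Ms n N ξ l = polMatrix n N ξ l (1 / 2) := by
    ext i j
    simp [polMatrix]
  have hsum : ∑ k ∈ Finset.range (N + 1),
      l ^ (N - k) / (-2) ^ k * ((sgnExpSum n ξ 1 N k : ℝ) : ℂ) =
      ∑ s ∈ (Icc 1 N).powerset, expTerm n ξ l N s := by
    rw [sum_powerset, Nat.card_Icc, Nat.add_sub_cancel]
    refine sum_congr rfl fun k _ => ?_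
    rw [sgnExpSum, Complex.ofReal_sum, mul_sum]
    refine sum_congr rfl fun s hs => ?_
    rw [expTerm, (mem_powersetCard.1 hs).2]
  rw [hM, det_polMatrix, hsum, evenPart, oddPart, show (2 * (1 / 2) : ℂ) = 1 by norm_num,
    one_mul, ← mul_add, ← sum_add_distrib]
  congr 1
  refine sum_congr rfl fun s _ => ?_
  split_ifs <;> simp
end

section
/- For every 1 ≤ i ≤ N and every λ ∈ ℂ, with λ_p = (−1)^{p−1} λ, the determinant of the trailing submatrix M_{i:N,s} equals ε_{N,i} · Σ_{k=0}^{N+1−i} (λ^{N+1−i−k} / (−2)^k) · ( Σ_{i ≤ i_1 < ⋯ < i_k ≤ N} (−1)^{i_1+⋯+i_k} · exp(2 n Σ_{l=1}^{k} (−1)^l ξ_{i_l}) ), where ε_{N,i} = (−1)^{⌊(N+1−i)/2⌋} if N is odd and ε_{N,i} = (−1)^{i−1} (−1)^{⌊(N+1−i)/2⌋} if N is even; here for k = 0 the inner sum is 1. -/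
/-!
Put `x_p = e^{-nξ_p}` and `y_p = x_p²`. The matrix is semiseparable: above the diagonal its entries
are `x_p (x_q - x_q⁻¹) / 2`, below it they are `x_q (x_p + x_p⁻¹) / 2`, and on it `λ_p + x_p² / 2`.
Let `D_i` be its determinant and `P_i` the determinant of the same matrix bordered by the row
`(1, x_q - x_q⁻¹)` and the column `(1, (x_p + x_p⁻¹) / 2)`. Then

* `D_i = λ_i D_{i+1} + (y_i / 2) P_{i+1}` (`det_semisep_succ`): split `λ_i` off the corner entry; what
  remains is the bordered matrix with a rescaled first row and column;
* `P_i = λ_i P_{i+1} + (1 / (2 y_i)) D_{i+1}` (`det_bordered_succ`): one row and one column operation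
  against the border make row `i` and column `i` sparse.

Splitting subsets of `{i, …, N}` by whether they contain `i`, the generating sums `F_i^±` of the
right-hand side (with the exponent multiplied by `±1`) satisfy the same coupled recurrence up to the
sign `(-1)^{i-1}` (`altSum_succ`), because removing the smallest element flips all later signs. Hence
`D_i = α_i F_i^+` and `P_i = α_i F_i^-` with `α_i = ∏_{p=i}^N (-1)^{p-1}`, and `α_i` is the sign
`ε_{N,i}`.
-/

open Finset

/-- The trailing submatrix `M_{i:N,s}` with rows and columns indexed by
`p, q ∈ {i, …, N}` (realized as `p = i + a` for `a : Fin (N+1−i)`):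
the `(p,p)` entry is `(−1)^{p−1} λ + (1/2) e^{−2nξ_p}`, the `(p,q)` entry for
`p < q` is `−sinh(nξ_q) e^{−nξ_p}`, and for `p > q` it is `cosh(nξ_p) e^{−nξ_q}`. -/
noncomputable def MsSub (n N : ℕ) (ξ : ℕ → ℝ) (l : ℂ) (i : ℕ) :
    Matrix (Fin (N + 1 - i)) (Fin (N + 1 - i)) ℂ :=
  fun a b =>
    if a = b then
      (-1 : ℂ) ^ (i + (a : ℕ) - 1) * l +
        ((Real.exp (-(2 * n * ξ (i + (a : ℕ)))) / 2 : ℝ) : ℂ)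
    else if a < b then
      -(((Real.sinh (n * ξ (i + (b : ℕ))) * Real.exp (-(n * ξ (i + (a : ℕ))))) : ℝ) : ℂ)
    else
      (((Real.cosh (n * ξ (i + (a : ℕ))) * Real.exp (-(n * ξ (i + (b : ℕ))))) : ℝ) : ℂ)

/-! ### The semiseparable determinants -/

/-- The semiseparable matrix of size `m` with data `x`, `lam` (indices start at `0`). -/
noncomputable def semisep (x lam : ℕ → ℂ) (m : ℕ) : Matrix (Fin m) (Fin m) ℂ :=
  Matrix.of fun a b =>
    if a = b then lam a + x a ^ 2 / 2
    else if a < b then x a * (x b - (x b)⁻¹) / 2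
    else x b * (x a + (x a)⁻¹) / 2

/-- `semisep` bordered by a new first row `(1, x_q - x_q⁻¹)` and a new first column
`(1, (x_p + x_p⁻¹) / 2)`. -/
noncomputable def bordered (x lam : ℕ → ℂ) (m : ℕ) : Matrix (Fin (m + 1)) (Fin (m + 1)) ℂ :=
  Matrix.of (Fin.cons (Fin.cons 1 (fun b : Fin m => x b - (x b)⁻¹))
    (fun a : Fin m => Fin.cons ((x a + (x a)⁻¹) / 2) (semisep x lam m a)))

lemma semisep_succ_succ (x lam : ℕ → ℂ) (m : ℕ) (a b : Fin m) :
    semisep x lam (m + 1) a.succ b.succ =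
      semisep (fun k => x (k + 1)) (fun k => lam (k + 1)) m a b := by
  simp [semisep, Fin.succ_lt_succ_iff]

lemma det_semisep_succ (x lam : ℕ → ℂ) (m : ℕ) :
    (semisep x lam (m + 1)).det =
      lam 0 * (semisep (fun k => x (k + 1)) (fun k => lam (k + 1)) m).det +
      x 0 ^ 2 / 2 * (bordered (fun k => x (k + 1)) (fun k => lam (k + 1)) m).det := by
  set x' : ℕ → ℂ := fun k => x (k + 1)
  set lam' : ℕ → ℂ := fun k => lam (k + 1)
  set r : Fin (m + 1) → ℂ := Fin.cons (x 0 ^ 2 / 2) (fun b : Fin m => x 0 * (x' b - (x' b)⁻¹) / 2)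
  have h1 : semisep x lam (m + 1) =
      (semisep x lam (m + 1)).updateRow 0 (lam 0 • Pi.single 0 1 + r) := by
    ext a b
    refine Fin.cases ?_ (fun a => ?_) a
    · refine Fin.cases ?_ (fun b => ?_) b
      · simp [semisep, r]
      · simp [semisep, r, x', Fin.ext_iff]
    · simp [Matrix.updateRow_apply]
  have h2 : ((semisep x lam (m + 1)).updateRow 0 (Pi.single 0 1)).det =
      (semisep x' lam' m).det := by
    rw [Matrix.det_succ_row_zero, Fin.sum_univ_succ]
    simp only [Matrix.updateRow_self, Pi.single_eq_same]
    rw [Finset.sum_eq_zero]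
    · simp only [Fin.val_zero, pow_zero, one_mul, add_zero]
      congr 1
      ext a b
      simp [Matrix.updateRow_apply, semisep_succ_succ, x', lam']
    · intro j _
      simp
  have h3 : (semisep x lam (m + 1)).updateRow 0 r =
      Matrix.diagonal (Fin.cons (x 0 / 2) (fun _ => 1)) * bordered x' lam' m *
        Matrix.diagonal (Fin.cons (x 0) (fun _ => 1)) := by
    ext a b
    rw [Matrix.mul_diagonal, Matrix.diagonal_mul]
    refine Fin.cases ?_ (fun a => ?_) a
    · refine Fin.cases ?_ (fun b => ?_) b
      · simp [bordered, r]; ring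
      · simp [bordered, r]; ring
    · refine Fin.cases ?_ (fun b => ?_) b
      · simp [Matrix.updateRow_apply, bordered, semisep, x']; ring
      · simp [Matrix.updateRow_apply, semisep_succ_succ, bordered, x', lam']
  rw [h1, Matrix.det_updateRow_add, Matrix.det_updateRow_smul, h2, h3, Matrix.det_mul,
    Matrix.det_mul, Matrix.det_diagonal, Matrix.det_diagonal]
  simp [Fin.prod_univ_succ]
  ring

lemma det_bordered_succ (x lam : ℕ → ℂ) (hx : ∀ k, x k ≠ 0) (m : ℕ) :
    (bordered x lam (m + 1)).det =
      lam 0 * (bordered (fun k => x (k + 1)) (fun k => lam (k + 1)) m).det +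
      (x 0 ^ 2)⁻¹ / 2 * (semisep (fun k => x (k + 1)) (fun k => lam (k + 1)) m).det := by
  set x' : ℕ → ℂ := fun k => x (k + 1)
  set lam' : ℕ → ℂ := fun k => lam (k + 1)
  -- The matrix after subtracting `x 0 / 2` times the border row from row `1`.
  let R : Matrix (Fin (m + 2)) (Fin (m + 2)) ℂ :=
    Matrix.of (Fin.cons (Fin.cons 1 (Fin.cons (x 0 - (x 0)⁻¹) fun b : Fin m => x' b - (x' b)⁻¹))
      (Fin.cons (Fin.cons ((x 0)⁻¹ / 2) (Fin.cons (lam 0 + 1 / 2) fun _ => 0))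
        fun a : Fin m => Fin.cons ((x' a + (x' a)⁻¹) / 2)
          (Fin.cons (x 0 * (x' a + (x' a)⁻¹) / 2) (semisep x' lam' m a))))
  -- The matrix after also subtracting `x 0` times the border column from column `1`.
  let E : Matrix (Fin (m + 2)) (Fin (m + 2)) ℂ :=
    Matrix.of (Fin.cons (Fin.cons 1 (Fin.cons (-(x 0)⁻¹) fun b : Fin m => x' b - (x' b)⁻¹))
      (Fin.cons (Fin.cons ((x 0)⁻¹ / 2) (Fin.cons (lam 0) fun _ => 0))
        fun a : Fin m => Fin.cons ((x' a + (x' a)⁻¹) / 2)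
          (Fin.cons 0 (semisep x' lam' m a))))
  have h0 := hx 0
  have hR : (bordered x lam (m + 1)).det = R.det := by
    refine Matrix.det_eq_of_forall_row_eq_smul_add_const
      (Fin.cons 0 (Fin.cons (x 0 / 2) fun _ => 0)) 0 rfl ?_
    intro a b
    refine Fin.cases ?_ (fun a => Fin.cases ?_ (fun a => ?_) a) a <;>
    refine Fin.cases ?_ (fun b => Fin.cases ?_ (fun b => ?_) b) b <;>
    first
    | (simp [R, bordered, semisep, x', lam', Fin.ext_iff]; done)
    | (simp [R, bordered, semisep, x', lam', Fin.ext_iff]; field_simp; try ring)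
  have hE : R.det = E.det := by
    rw [← Matrix.det_transpose R, ← Matrix.det_transpose E]
    refine Matrix.det_eq_of_forall_row_eq_smul_add_const
      (Fin.cons 0 (Fin.cons (x 0) fun _ => 0)) 0 rfl ?_
    intro b a
    refine Fin.cases ?_ (fun a => Fin.cases ?_ (fun a => ?_) a) a <;>
    refine Fin.cases ?_ (fun b => Fin.cases ?_ (fun b => ?_) b) b <;>
    first
    | (simp [R, E]; done)
    | (simp [R, E]; field_simp; done)
    | (simp [R, E]; field_simp; ring)
  have hm1 : (E.submatrix (Fin.succAbove 1) (Fin.succAbove 1)) = bordered x' lam' m := by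
    ext a b
    refine Fin.cases ?_ (fun a => ?_) a <;> refine Fin.cases ?_ (fun b => ?_) b <;>
    simp [E, bordered]
  have hm0 : (E.submatrix (Fin.succAbove 1) (Fin.succAbove 0)).det =
      -(x 0)⁻¹ * (semisep x' lam' m).det := by
    rw [Matrix.det_succ_column_zero, Fin.sum_univ_succ, Finset.sum_eq_zero]
    · have : ((E.submatrix (Fin.succAbove 1) (Fin.succAbove 0)).submatrix (Fin.succAbove 0)
          Fin.succ) = semisep x' lam' m := by
        ext a b
        simp [E]
      rw [this]
      simp [E]
    · intro a _
      simp [E]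
  rw [hR, hE, Matrix.det_succ_row E 1, Fin.sum_univ_succ, Fin.sum_univ_succ, Finset.sum_eq_zero]
  · rw [hm0, Fin.succ_zero_eq_one, hm1]
    simp [E]
    field_simp
    try ring
  · intro b _
    simp [E]

/-! ### The generating sums -/

/-- The generating sum over subsets `s` of `{lo, …, lo + m - 1}`, with the alternating exponent
multiplied by `e` (which is `1` or `-1` in the argument). -/
noncomputable def altSum (n : ℕ) (ξ : ℕ → ℝ) (l : ℂ) (e : ℝ) (lo m : ℕ) : ℂ :=
  ∑ s ∈ (Finset.Ico lo (lo + m)).powerset,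
    l ^ (m - s.card) / (-2) ^ s.card * (((-1 : ℝ) ^ (∑ i ∈ s, i) *
      Real.exp (2 * n * (e * ∑ i ∈ s, (-1 : ℝ) ^ ((s.filter (· ≤ i)).card) * ξ i)) : ℝ) : ℂ)

/-- Adding a new smallest element to `s` shifts every other position by one, so the alternating
sum of the rest changes sign. -/
lemma alt_insert (ξ : ℕ → ℝ) (lo : ℕ) (s : Finset ℕ) (hs : ∀ i ∈ s, lo < i) :
    ∑ i ∈ insert lo s, (-1 : ℝ) ^ (((insert lo s).filter (· ≤ i)).card) * ξ i =
      -ξ lo - ∑ i ∈ s, (-1 : ℝ) ^ ((s.filter (· ≤ i)).card) * ξ i := by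
  have hlo : lo ∉ s := fun h => lt_irrefl _ (hs lo h)
  rw [Finset.sum_insert hlo, sub_eq_add_neg, ← Finset.sum_neg_distrib]
  congr 1
  · have : (insert lo s).filter (· ≤ lo) = {lo} := by
      ext j
      simp only [Finset.mem_filter, Finset.mem_insert, Finset.mem_singleton]
      constructor
      · rintro ⟨rfl | h, h2⟩
        · rfl
        · exact absurd (hs j h) (not_lt.mpr h2)
      · rintro rfl
        exact ⟨Or.inl rfl, le_rfl⟩
    rw [this]
    simp
  · refine Finset.sum_congr rfl fun i hi => ?_
    rw [Finset.filter_insert, if_pos (hs i hi).le, Finset.card_insert_of_notMem]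
    · ring
    · simp [hlo]

lemma altSum_succ (n : ℕ) (ξ : ℕ → ℝ) (l : ℂ) (e : ℝ) (lo m : ℕ) :
    altSum n ξ l e lo (m + 1) = l * altSum n ξ l e (lo + 1) m +
      (-1) ^ (lo + 1) / 2 * ((Real.exp (-(2 * n * (e * ξ lo))) : ℝ) : ℂ) *
        altSum n ξ l (-e) (lo + 1) m := by
  have hI : Finset.Ico lo (lo + (m + 1)) = insert lo (Finset.Ico (lo + 1) (lo + 1 + m)) := by
    ext j
    simp only [Finset.mem_Ico, Finset.mem_insert]
    omega
  unfold altSum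
  rw [hI, Finset.sum_powerset_insert (by simp), Finset.mul_sum, Finset.mul_sum]
  congr 1
  · refine Finset.sum_congr rfl fun s hs => ?_
    have hc : s.card ≤ m := by
      simpa using Finset.card_le_card (Finset.mem_powerset.mp hs)
    rw [Nat.succ_sub hc, pow_succ]
    ring
  · refine Finset.sum_congr rfl fun s hs => ?_
    have hlt : ∀ i ∈ s, lo < i := fun i hi => by
      have := Finset.mem_Ico.mp (Finset.mem_powerset.mp hs hi)
      omega
    have hlo : lo ∉ s := fun h => lt_irrefl _ (hlt lo h)
    rw [alt_insert ξ lo s hlt, Finset.card_insert_of_notMem hlo, Finset.sum_insert hlo,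
      Nat.succ_sub_succ]
    have he : ∀ A : ℝ, Real.exp (2 * n * (e * (-ξ lo - A))) =
        Real.exp (-(2 * n * (e * ξ lo))) * Real.exp (2 * n * (-e * A)) := fun A => by
      rw [← Real.exp_add]
      congr 1
      ring
    rw [he]
    push_cast
    rw [pow_add, pow_succ (-2 : ℂ), pow_succ (-1 : ℂ)]
    field_simp
    ring

/-! ### The sign -/

/-- The sign `∏_{p=lo}^{lo+m-1} (-1)^{p-1}`, written with `p + 1` in place of `p - 1`. -/
def signProd (lo m : ℕ) : ℂ := ∏ a ∈ Finset.range m, (-1) ^ (lo + a + 1)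

lemma signProd_succ (lo m : ℕ) :
    signProd lo (m + 1) = (-1) ^ (lo + 1) * signProd (lo + 1) m := by
  unfold signProd
  rw [Finset.prod_range_succ', mul_comm]
  congr 1
  refine Finset.prod_congr rfl fun a _ => ?_
  congr 1
  ring

lemma signProd_even (lo j : ℕ) : signProd lo (2 * j) = (-1) ^ j := by
  induction j with
  | zero => simp [signProd]
  | succ j ih =>
    have h : signProd lo (2 * (j + 1)) =
        signProd lo (2 * j) * (-1) ^ (lo + 2 * j + 1) * (-1) ^ (lo + (2 * j + 1) + 1) := by
      unfold signProd
      rw [show 2 * (j + 1) = 2 * j + 1 + 1 by ring, Finset.prod_range_succ, Finset.prod_range_succ]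
    have hodd : (-1 : ℂ) ^ (lo + 2 * j + 1 + (lo + (2 * j + 1) + 1)) = -1 :=
      Odd.neg_one_pow ⟨lo + 2 * j + 1, by ring⟩
    rw [h, ih, mul_assoc, ← pow_add, hodd, pow_succ]

lemma signProd_odd (lo j : ℕ) : signProd lo (2 * j + 1) = (-1) ^ j * (-1) ^ (lo + 1) := by
  rw [signProd_succ, signProd_even, mul_comm]

/-! ### Assembling the formula -/

/-- The determinants and the generating sums solve the same coupled recurrence. -/
lemma det_eq_signProd (n : ℕ) (ξ : ℕ → ℝ) (l : ℂ) (m : ℕ) : ∀ lo : ℕ,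
    (semisep (fun a => ((Real.exp (-(n * ξ (lo + a))) : ℝ) : ℂ))
      (fun a => (-1) ^ (lo + a + 1) * l) m).det = signProd lo m * altSum n ξ l 1 lo m ∧
    (bordered (fun a => ((Real.exp (-(n * ξ (lo + a))) : ℝ) : ℂ))
      (fun a => (-1) ^ (lo + a + 1) * l) m).det = signProd lo m * altSum n ξ l (-1) lo m := by
  induction m with
  | zero =>
    intro lo
    constructor
    · simp [signProd, altSum]
    · simp [signProd, altSum, bordered]
  | succ m ih =>
    intro lo
    have hx : ∀ k, (fun a => ((Real.exp (-(n * ξ (lo + a))) : ℝ) : ℂ)) k ≠ 0 := fun k =>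
      Complex.ofReal_ne_zero.mpr (Real.exp_pos _).ne'
    obtain ⟨h1, h2⟩ := ih (lo + 1)
    have e1 : (fun k => ((Real.exp (-(n * ξ (lo + (k + 1)))) : ℝ) : ℂ)) =
        fun a => ((Real.exp (-(n * ξ (lo + 1 + a))) : ℝ) : ℂ) := by
      funext k
      rw [show lo + (k + 1) = lo + 1 + k by ring]
    have e2 : (fun k => (-1 : ℂ) ^ (lo + (k + 1) + 1) * l) =
        fun a => (-1 : ℂ) ^ (lo + 1 + a + 1) * l := by
      funext k
      rw [show lo + (k + 1) = lo + 1 + k by ring]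
    have hsq : ((-1 : ℂ) ^ (lo + 1)) * (-1) ^ (lo + 1) = 1 := by
      rw [← mul_pow]
      simp
    have hy : ((Real.exp (-(n * ξ lo)) : ℝ) : ℂ) ^ 2 =
        ((Real.exp (-(2 * n * (1 * ξ lo))) : ℝ) : ℂ) := by
      rw [← Complex.ofReal_pow, ← Real.exp_nat_mul]
      congr 2
      push_cast
      ring
    have hy' : (((Real.exp (-(n * ξ lo)) : ℝ) : ℂ) ^ 2)⁻¹ =
        ((Real.exp (-(2 * n * (-1 * ξ lo))) : ℝ) : ℂ) := by
      rw [hy, ← Complex.ofReal_inv, ← Real.exp_neg]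
      congr 2
      ring
    constructor
    · rw [det_semisep_succ]
      simp only [e1, e2, add_zero]
      rw [h1, h2, hy, altSum_succ, signProd_succ]
      linear_combination (-(signProd (lo + 1) m * altSum n ξ l (-1) (lo + 1) m / 2 *
        ((Real.exp (-(2 * n * (1 * ξ lo))) : ℝ) : ℂ))) * hsq
    · rw [det_bordered_succ _ _ hx]
      simp only [e1, e2, add_zero]
      rw [h1, h2, hy', altSum_succ, signProd_succ, neg_neg]
      linear_combination (-(signProd (lo + 1) m * altSum n ξ l 1 (lo + 1) m / 2 *
        ((Real.exp (-(2 * n * (-1 * ξ lo))) : ℝ) : ℂ))) * hsq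

lemma MsSub_eq_semisep (n N : ℕ) (ξ : ℕ → ℝ) (l : ℂ) (i : ℕ) (hi1 : 1 ≤ i) :
    MsSub n N ξ l i = semisep (fun a => ((Real.exp (-(n * ξ (i + a))) : ℝ) : ℂ))
      (fun a => (-1) ^ (i + a + 1) * l) (N + 1 - i) := by
  ext a b
  unfold MsSub semisep
  simp only [Matrix.of_apply]
  split_ifs with h1 h2
  · have hp : (-1 : ℂ) ^ (i + (a : ℕ) + 1) = (-1) ^ (i + (a : ℕ) - 1) := by
      rw [show i + (a : ℕ) + 1 = i + (a : ℕ) - 1 + 2 by omega, pow_add]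
      simp
    rw [hp, ← Complex.ofReal_pow, ← Real.exp_nat_mul]
    push_cast
    congr 3
    ring
  · rw [← Complex.ofReal_inv, ← Real.exp_neg, neg_neg, Real.sinh_eq]
    push_cast
    ring
  · rw [← Complex.ofReal_inv, ← Real.exp_neg, neg_neg, Real.cosh_eq]
    push_cast
    ring

/-- Explicit formula for the determinant of the trailing submatrix `M_{i:N,s}`. -/
theorem det_MsSub_eq (N n : ℕ) (hN : 0 < N) (hn : 0 < n) (ξ : ℕ → ℝ)
    (hξ : ∀ i j, 1 ≤ i → i < j → j ≤ N → ξ j < ξ i) (hpos : 0 < ξ N)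
    (i : ℕ) (hi1 : 1 ≤ i) (hiN : i ≤ N) (l : ℂ) :
    (MsSub n N ξ l i).det =
      (if Odd N then (-1 : ℂ) ^ ((N + 1 - i) / 2)
        else (-1 : ℂ) ^ (i - 1) * (-1 : ℂ) ^ ((N + 1 - i) / 2)) *
        ∑ k ∈ Finset.range (N + 1 - i + 1),
          l ^ (N + 1 - i - k) / (-2) ^ k * ((sgnExpSum n ξ i N k : ℝ) : ℂ) := by
  have hsum : ∑ k ∈ Finset.range (N + 1 - i + 1),
      l ^ (N + 1 - i - k) / (-2) ^ k * ((sgnExpSum n ξ i N k : ℝ) : ℂ) =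
      altSum n ξ l 1 i (N + 1 - i) := by
    have hI : Finset.Ico i (i + (N + 1 - i)) = Finset.Icc i N := by
      ext j
      simp only [Finset.mem_Ico, Finset.mem_Icc]
      omega
    unfold altSum
    rw [hI, Finset.sum_powerset, Nat.card_Icc]
    refine Finset.sum_congr rfl fun k _ => ?_
    unfold sgnExpSum
    rw [Complex.ofReal_sum, Finset.mul_sum]
    refine Finset.sum_congr rfl fun s hs => ?_
    rw [(Finset.mem_powersetCard.mp hs).2, one_mul]
  rw [hsum, MsSub_eq_semisep n N ξ l i hi1, (det_eq_signProd n ξ l (N + 1 - i) i).1]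
  congr 1
  obtain ⟨m, hm⟩ : ∃ m, N + 1 - i = m := ⟨_, rfl⟩
  rw [hm]
  rcases Nat.even_or_odd' m with ⟨j, rfl | rfl⟩
  · rw [signProd_even, show 2 * j / 2 = j by omega]
    split_ifs with h
    · rfl
    · have : Even (i - 1) := by
        rw [Nat.not_odd_iff_even] at h
        grind
      rw [this.neg_one_pow, one_mul]
  · rw [signProd_odd, show (2 * j + 1) / 2 = j by omega]
    split_ifs with h
    · have : Even (i + 1) := by grind
      rw [this.neg_one_pow, mul_one]
    · have h1 : Odd (i + 1) := by
        rw [Nat.not_odd_iff_even] at h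
        grind
      have h2 : Odd (i - 1) := by grind
      rw [h1.neg_one_pow, h2.neg_one_pow, mul_comm]
end
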